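/- arXiv:2305.04288 — 2 statements merged into one kernel-verified Lean document; each statement's English description precedes it below -/
import Mathlib

section
/- Log-ratio bound for the mixture density: under the conditional-density setup, let P and Q be probability measures on 𝒲 and ξ ≥ 0, and suppose that for every d ∈ 𝒟 the map w ↦ f(d, w) is bounded with 0 < inf_{w∈𝒲} f(d, w) and sup_{w∈𝒲} f(d, w) ≤ e^{2ξ} · inf_{w∈𝒲} f(d, w). Let ḡ(d) = (g_P(d) + g_Q(d))/2. Then for every d ∈ 𝒟, |log(ḡ(d) / g_P(d))| ≤ (1/2)·(e^{2ξ} − 1)·TV(P, Q). -/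
open MeasureTheory

/-- Total variation distance between two measures: the supremum over measurable sets `A`
of `|P(A) − Q(A)|`. -/
noncomputable def tvDist {Ω : Type*} [MeasurableSpace Ω] (P Q : Measure Ω) : ℝ :=
  ⨆ A : {s : Set Ω // MeasurableSet s}, |(P A.1).toReal - (Q A.1).toReal|

theorem abs_measureReal_sub_le_tvDist {Ω : Type*} [MeasurableSpace Ω] (P Q : Measure Ω)
    [IsProbabilityMeasure P] [IsProbabilityMeasure Q] {s : Set Ω} (hs : MeasurableSet s) :
    |P.real s - Q.real s| ≤ tvDist P Q := by
  refine le_ciSup (f := fun A : {s : Set Ω // MeasurableSet s} =>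
    |(P A.1).toReal - (Q A.1).toReal|) ⟨1, ?_⟩ ⟨s, hs⟩
  rintro _ ⟨A, rfl⟩
  exact abs_sub_le_of_nonneg_of_le measureReal_nonneg measureReal_le_one
    measureReal_nonneg measureReal_le_one

/-- The layer-cake bound for functions with values in `[0, c]`. -/
theorem abs_integral_sub_le_mul_tvDist_of_nonneg {Ω : Type*} [MeasurableSpace Ω]
    (P Q : Measure Ω) [IsProbabilityMeasure P] [IsProbabilityMeasure Q] {h : Ω → ℝ}
    (hh : Measurable h) {c : ℝ} (hc : 0 ≤ c) (h0 : ∀ w, 0 ≤ h w) (h1 : ∀ w, h w ≤ c) :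
    |∫ w, h w ∂P - ∫ w, h w ∂Q| ≤ c * tvDist P Q := by
  have hint (ν : Measure Ω) [IsProbabilityMeasure ν] : Integrable h ν :=
    .of_mem_Icc 0 c hh.aemeasurable (.of_forall fun w => ⟨h0 w, h1 w⟩)
  have htail (ν : Measure Ω) [IsProbabilityMeasure ν] :
      IntegrableOn (fun t : ℝ => ν.real {w | t ≤ h w}) (Set.Ioc 0 c) := by
    have hanti : Antitone fun t : ℝ => ν.real {w | t ≤ h w} :=
      fun s t hst => measureReal_mono fun w (hw : t ≤ h w) => hst.trans hw
    exact ((hanti.antitoneOn _).integrableOn_isCompact isCompact_Icc).mono_set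
      Set.Ioc_subset_Icc_self
  rw [(hint P).integral_eq_integral_Ioc_meas_le (.of_forall h0) (.of_forall h1),
    (hint Q).integral_eq_integral_Ioc_meas_le (.of_forall h0) (.of_forall h1),
    ← integral_sub (htail P) (htail Q)]
  have key := norm_setIntegral_le_of_norm_le_const (μ := volume) (s := Set.Ioc 0 c)
    (f := fun t : ℝ => P.real {w | t ≤ h w} - Q.real {w | t ≤ h w}) (C := tvDist P Q)
    (by simp) fun t _ => abs_measureReal_sub_le_tvDist P Q (measurableSet_le measurable_const hh)
  rwa [Real.volume_real_Ioc_of_le hc, sub_zero, mul_comm] at key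

theorem abs_integral_sub_le_mul_tvDist {Ω : Type*} [MeasurableSpace Ω]
    (P Q : Measure Ω) [IsProbabilityMeasure P] [IsProbabilityMeasure Q] {h : Ω → ℝ}
    (hh : Measurable h) {a b : ℝ} (hab : a ≤ b) (ha : ∀ w, a ≤ h w) (hb : ∀ w, h w ≤ b) :
    |∫ w, h w ∂P - ∫ w, h w ∂Q| ≤ (b - a) * tvDist P Q := by
  have hint (ν : Measure Ω) [IsProbabilityMeasure ν] : Integrable h ν :=
    .of_mem_Icc a b hh.aemeasurable (.of_forall fun w => ⟨ha w, hb w⟩)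
  have key := abs_integral_sub_le_mul_tvDist_of_nonneg P Q (hh.sub_const a)
    (sub_nonneg.2 hab) (fun w => sub_nonneg.2 (ha w)) fun w => sub_le_sub_right (hb w) a
  rw [integral_sub (hint P) (integrable_const a), integral_sub (hint Q) (integrable_const a)] at key
  simpa using key

/-- The logarithm is `1 / m`-Lipschitz on `[m, ∞)`. -/
theorem abs_log_div_le_abs_sub_div {m x y : ℝ} (hm : 0 < m) (hx : m ≤ x) (hy : m ≤ y) :
    |Real.log (x / y)| ≤ |x - y| / m := by
  have log_div_le {u v : ℝ} (hu : m ≤ u) (hv : m ≤ v) : Real.log (u / v) ≤ |u - v| / m := by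
    have hv0 : 0 < v := hm.trans_le hv
    calc Real.log (u / v) ≤ u / v - 1 := Real.log_le_sub_one_of_pos (div_pos (hm.trans_le hu) hv0)
      _ = (u - v) / v := by field_simp
      _ ≤ |u - v| / v := by gcongr; exact le_abs_self _
      _ ≤ |u - v| / m := by gcongr
  refine abs_le'.2 ⟨log_div_le hx hy, ?_⟩
  rw [← Real.log_inv, inv_div, abs_sub_comm]
  exact log_div_le hy hx

/-- Log-ratio bound for the mixture density: in the conditional-density setup, if for every
`d` the conditional density `w ↦ f d w` is bounded with positive infimum and
`sup_w f d w ≤ e^{2ξ} · inf_w f d w`, and `ḡ = (g_P + g_Q)/2` is the mixture of the induced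
marginal densities, then for every `d`,
`|log(ḡ(d)/g_P(d))| ≤ (1/2) (e^{2ξ} − 1) TV(P, Q)`. -/
theorem log_ratio_mixture_density_bound
    {W D : Type*} [MeasurableSpace W] [MeasurableSpace D] [Nonempty W]
    (μ : Measure D) [SigmaFinite μ]
    (f : D → W → ℝ) (hf_meas : Measurable (Function.uncurry f))
    (hf_nonneg : ∀ d w, 0 ≤ f d w)
    (hf_density : ∀ w, ∫ d, f d w ∂μ = 1)
    (P Q : Measure W) [IsProbabilityMeasure P] [IsProbabilityMeasure Q]
    (ξ : ℝ) (hξ : 0 ≤ ξ)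
    (hbdd : ∀ d, BddAbove (Set.range fun w => f d w))
    (hinf_pos : ∀ d, 0 < ⨅ w, f d w)
    (hratio : ∀ d, (⨆ w, f d w) ≤ Real.exp (2 * ξ) * ⨅ w, f d w)
    (gP gQ gbar : D → ℝ)
    (hgP : ∀ d, gP d = ∫ w, f d w ∂P)
    (hgQ : ∀ d, gQ d = ∫ w, f d w ∂Q)
    (hgbar : ∀ d, gbar d = (gP d + gQ d) / 2) :
    ∀ d, |Real.log (gbar d / gP d)| ≤ (1 / 2) * (Real.exp (2 * ξ) - 1) * tvDist P Q := by
  intro d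
  set m := ⨅ w, f d w
  set c := Real.exp (2 * ξ) - 1
  have hm : 0 < m := hinf_pos d
  have hlow (w : W) : m ≤ f d w := ciInf_le ⟨0, by rintro _ ⟨w, rfl⟩; exact hf_nonneg d w⟩ w
  have hup (w : W) : f d w ≤ Real.exp (2 * ξ) * m := (le_ciSup (hbdd d) w).trans (hratio d)
  have hmeas : Measurable (f d) := hf_meas.of_uncurry_left
  have hmean (ν : Measure W) [IsProbabilityMeasure ν] : m ≤ ∫ w, f d w ∂ν := by
    simpa using integral_mono (μ := ν) (integrable_const m)
      (.of_mem_Icc m _ hmeas.aemeasurable (.of_forall fun w => ⟨hlow w, hup w⟩)) hlow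
  have hP : m ≤ gP d := hgP d ▸ hmean P
  have hQ : m ≤ gQ d := hgQ d ▸ hmean Q
  have hdiff : |gP d - gQ d| ≤ c * m * tvDist P Q := by
    have key := abs_integral_sub_le_mul_tvDist P Q hmeas
      ((hlow (Classical.arbitrary W)).trans (hup _)) hlow hup
    rwa [← hgP, ← hgQ, ← sub_one_mul] at key
  have hmid : gbar d - gP d = -((gP d - gQ d) / 2) := by rw [hgbar]; ring
  have hbar : m ≤ gbar d := by linarith
  refine (abs_log_div_le_abs_sub_div hm hbar hP).trans ?_
  rw [div_le_iff₀ hm, hmid, abs_neg, abs_div, abs_two]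
  linarith
end

section
/- Lower bound for privacy leakage (single-client version): under the conditional-density setup, let P and Q be probability measures on 𝒲, let F̆ be a probability measure on 𝒟, and let ξ ≥ 0 be such that for every d ∈ 𝒟 the map w ↦ f(d, w) is bounded with 0 < inf_{w∈𝒲} f(d, w) and sup_{w∈𝒲} f(d, w) ≤ e^{2ξ} · inf_{w∈𝒲} f(d, w). Then √(JS(G_Q ‖ F̆)) ≥ √(JS(G_P ‖ F̆)) − (1/2)(e^{2ξ} − 1) · TV(P, Q). -/
open MeasureTheory
open scoped ENNReal

/-- Kullback–Leibler divergence `KL(μ₁ ‖ μ₂) = ∫ log(dμ₁/dμ₂) dμ₁`. -/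
noncomputable def klDiv {Ω : Type*} [MeasurableSpace Ω] (μ₁ μ₂ : Measure Ω) : ℝ :=
  ∫ x, llr μ₁ μ₂ x ∂μ₁

/-- Jensen–Shannon divergence `JS(μ₁ ‖ μ₂) = (1/2) KL(μ₁ ‖ m) + (1/2) KL(μ₂ ‖ m)` with
`m = (μ₁ + μ₂)/2`. -/
noncomputable def jsDiv {Ω : Type*} [MeasurableSpace Ω] (μ₁ μ₂ : Measure Ω) : ℝ :=
  (1 / 2) * klDiv μ₁ ((2 : ℝ≥0∞)⁻¹ • (μ₁ + μ₂)) + (1 / 2) * klDiv μ₂ ((2 : ℝ≥0∞)⁻¹ • (μ₁ + μ₂))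

/-- The pointwise integrand of the Jensen–Shannon divergence. -/
noncomputable def jsFun (a c : ℝ) : ℝ :=
  (1 / 2) * (a * Real.log a + c * Real.log c - (a + c) * Real.log ((a + c) / 2))

theorem mul_log_div_half_add {a c : ℝ} (ha : 0 ≤ a) (hc : 0 ≤ c) :
    a * Real.log (a / ((a + c) / 2)) = a * Real.log a - a * Real.log ((a + c) / 2) := by
  rcases ha.eq_or_lt with rfl | ha
  · simp
  · rw [Real.log_div ha.ne' (by positivity)]; ring

theorem jsFun_eq {a c : ℝ} (ha : 0 ≤ a) (hc : 0 ≤ c) :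
    jsFun a c = (1 / 2) * (a * Real.log (a / ((a + c) / 2)))
      + (1 / 2) * (c * Real.log (c / ((a + c) / 2))) := by
  have h := mul_log_div_half_add hc ha
  rw [add_comm c a] at h
  rw [mul_log_div_half_add ha hc, h, jsFun]
  ring

theorem abs_mul_log_div_half_add_le {a c : ℝ} (ha : 0 ≤ a) (hc : 0 ≤ c) :
    |a * Real.log (a / ((a + c) / 2))| ≤ a + c := by
  rcases ha.eq_or_lt with rfl | ha
  · simpa using hc
  have hu : 0 < a / ((a + c) / 2) := by positivity
  have hinv : a * (a / ((a + c) / 2))⁻¹ = (a + c) / 2 := by field_simp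
  have hlow := mul_le_mul_of_nonneg_left (Real.one_sub_inv_le_log_of_pos hu) ha.le
  have hle2 : a / ((a + c) / 2) ≤ 2 := by
    rw [div_le_iff₀ (by positivity)]; linarith
  have hup := mul_le_mul_of_nonneg_left (Real.log_le_sub_one_of_pos hu) ha.le
  rw [abs_le]
  constructor <;> nlinarith

/-- `√u |log u| ≤ |u - 1|`, in squared form. -/
theorem mul_log_sq_le {u : ℝ} (hu : 0 < u) : u * Real.log u ^ 2 ≤ (u - 1) ^ 2 := by
  obtain ⟨t, rfl⟩ : ∃ t, Real.exp (2 * t) = u :=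
    ⟨Real.log u / 2, by rw [mul_div_cancel₀ _ two_ne_zero, Real.exp_log hu]⟩
  have hsinh : t ^ 2 ≤ Real.sinh t ^ 2 := by
    rw [← sq_abs t, ← sq_abs (Real.sinh t), Real.abs_sinh]
    exact pow_le_pow_left₀ (abs_nonneg t) (Real.self_le_sinh_iff.2 (abs_nonneg t)) 2
  have hexp : Real.exp (2 * t) - 1 = 2 * Real.exp t * Real.sinh t := by
    rw [Real.sinh_eq, two_mul, Real.exp_add, Real.exp_neg]
    field_simp
  rw [hexp, Real.log_exp, two_mul t, Real.exp_add]
  nlinarith [mul_le_mul_of_nonneg_left hsinh (sq_nonneg (Real.exp t))]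

theorem sqrt_sub_one_sq_le {u : ℝ} (hu : 0 ≤ u) :
    (√u - 1) ^ 2 ≤ u * Real.log u - u + 1 := by
  rcases hu.eq_or_lt with rfl | hu
  · simp
  obtain ⟨s, hs, rfl⟩ : ∃ s, 0 < s ∧ s ^ 2 = u := ⟨√u, by positivity, Real.sq_sqrt hu.le⟩
  rw [Real.sqrt_sq hs.le, Real.log_pow]
  have h := mul_le_mul_of_nonneg_left (Real.one_sub_inv_le_log_of_pos hs) (sq_nonneg s)
  have hs' : s ^ 2 * s⁻¹ = s := by field_simp
  push_cast
  nlinarith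

theorem sq_sub_one_le_mul_log_add_mul_log {u v : ℝ} (hu : 0 ≤ u) (hv : 0 ≤ v) (huv : u + v = 2) :
    (u - 1) ^ 2 ≤ 2 * (u * Real.log u + v * Real.log v) := by
  have h₁ := sqrt_sub_one_sq_le hu
  have h₂ := sqrt_sub_one_sq_le hv
  have hA := Real.sq_sqrt hu
  have hB := Real.sq_sqrt hv
  have hA0 := Real.sqrt_nonneg u
  have hB0 := Real.sqrt_nonneg v
  set A := √u
  set B := √v
  have hAB : A + B ≤ 2 := by nlinarith [sq_nonneg (A - B)]
  have hkey : (u - 1) ^ 2 ≤ 2 * ((A - 1) ^ 2 + (B - 1) ^ 2) := by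
    have hprod : A * B ≤ 1 := by nlinarith [sq_nonneg (A - B)]
    have hsq : (u - 1) ^ 2 = 1 - (A * B) ^ 2 := by
      rw [mul_pow, hA, hB]; nlinarith
    have hsum : (A + B) ^ 2 = 2 + 2 * (A * B) := by nlinarith
    nlinarith [mul_nonneg hA0 hB0]
  linarith

theorem mul_log_sq_le_jsFun {a c : ℝ} (ha : 0 < a) (hc : 0 ≤ c) :
    a * Real.log (a / ((a + c) / 2)) ^ 2 ≤ 4 * jsFun a c := by
  have hs : 0 < (a + c) / 2 := by positivity
  have hu : 0 < a / ((a + c) / 2) := by positivity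
  have hv : 0 ≤ c / ((a + c) / 2) := by positivity
  have h := (mul_log_sq_le hu).trans (sq_sub_one_le_mul_log_add_mul_log hu.le hv (by field_simp))
  have h' := mul_le_mul_of_nonneg_left h hs.le
  rw [jsFun_eq ha.le hc]
  have e₁ : (a + c) / 2 * (a / ((a + c) / 2)) = a := by field_simp
  have e₂ : (a + c) / 2 * (c / ((a + c) / 2)) = c := by field_simp
  calc a * Real.log (a / ((a + c) / 2)) ^ 2
      = (a + c) / 2 * (a / ((a + c) / 2) * Real.log (a / ((a + c) / 2)) ^ 2) := by
        rw [← mul_assoc, e₁]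
    _ ≤ _ := h'
    _ = 2 * ((a + c) / 2 * (a / ((a + c) / 2)) * Real.log (a / ((a + c) / 2))
        + (a + c) / 2 * (c / ((a + c) / 2)) * Real.log (c / ((a + c) / 2))) := by ring
    _ = _ := by rw [e₁, e₂]; ring

theorem jsFun_nonneg {a c : ℝ} (ha : 0 ≤ a) (hc : 0 ≤ c) : 0 ≤ jsFun a c := by
  rcases ha.eq_or_lt with rfl | ha
  · rcases hc.eq_or_lt with rfl | hc
    · simp [jsFun]
    · rw [jsFun_eq le_rfl hc.le, zero_add, div_div_cancel₀ hc.ne']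
      have := Real.log_nonneg (one_le_two (α := ℝ))
      simp only [zero_mul, mul_zero, zero_add]
      positivity
  · have h := mul_log_sq_le_jsFun ha hc
    have : 0 ≤ a * Real.log (a / ((a + c) / 2)) ^ 2 := by positivity
    linarith

theorem hasDerivAt_jsFun {a c : ℝ} (ha : 0 < a) (hc : 0 ≤ c) :
    HasDerivAt (fun x => jsFun x c) ((1 / 2) * Real.log (a / ((a + c) / 2))) a := by
  have hs : (a + c) / 2 ≠ 0 := by positivity
  have h₁ := Real.hasDerivAt_mul_log ha.ne'
  have h₂ : HasDerivAt (fun x : ℝ => (x + c) / 2) (1 / 2) a :=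
    ((hasDerivAt_id a).add_const c).div_const 2
  have h₃ := ((hasDerivAt_id a).add_const c).mul (h₂.log hs)
  have h := ((h₁.add_const (c * Real.log c)).sub h₃).const_mul (1 / 2 : ℝ)
  refine HasDerivAt.congr_deriv (f := fun x => jsFun x c) h ?_
  rw [Real.log_div ha.ne' hs]
  simp only [id]
  field_simp
  ring

theorem sqrt_jsFun_add_sub_le {m a b c ε : ℝ} (hm : 0 < m) (ha : m ≤ a) (hb : m ≤ b)
    (hc : 0 ≤ c) (hε : 0 < ε) :
    √(jsFun a c + ε) - √(jsFun b c + ε) ≤ 1 / (2 * √m) * |a - b| := by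
  have hderiv : ∀ x ∈ Set.Ici m, HasDerivWithinAt (fun x => √(jsFun x c + ε))
      ((1 / 2) * Real.log (x / ((x + c) / 2)) / (2 * √(jsFun x c + ε))) (Set.Ici m) x := by
    intro x hx
    have hx0 : 0 < x := hm.trans_le hx
    have := jsFun_nonneg hx0.le hc
    exact (((hasDerivAt_jsFun hx0 hc).add_const ε).sqrt (by positivity)).hasDerivWithinAt
  have hbound : ∀ x ∈ Set.Ici m,
      ‖(1 / 2) * Real.log (x / ((x + c) / 2)) / (2 * √(jsFun x c + ε))‖ ≤ 1 / (2 * √m) := by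
    intro x hx
    have hx0 : 0 < x := hm.trans_le hx
    have hj := jsFun_nonneg hx0.le hc
    have hJ : 0 < √(jsFun x c + ε) := by positivity
    have hkey : √m * |Real.log (x / ((x + c) / 2))| ≤ 2 * √(jsFun x c + ε) := by
      refine le_of_sq_le_sq ?_ (by positivity)
      rw [mul_pow, mul_pow, sq_abs, Real.sq_sqrt hm.le, Real.sq_sqrt (by positivity)]
      have := mul_log_sq_le_jsFun hx0 hc
      have := mul_le_mul_of_nonneg_right (Set.mem_Ici.1 hx)
        (sq_nonneg (Real.log (x / ((x + c) / 2))))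
      linarith
    rw [Real.norm_eq_abs, abs_div, abs_mul, abs_of_pos (by positivity : 0 < 2 * √(jsFun x c + ε)),
      abs_of_pos (by norm_num : (0 : ℝ) < 1 / 2), div_le_div_iff₀ (by positivity) (by positivity)]
    linarith
  have h := (convex_Ici m).norm_image_sub_le_of_norm_hasDerivWithin_le hderiv hbound hb ha
  exact (le_abs_self _).trans h

theorem sqrt_jsFun_le {m a b c K : ℝ} (hm : 0 ≤ m) (ha : m ≤ a) (hb : m ≤ b) (hc : 0 ≤ c)
    (hK : 0 ≤ K) (hab : |a - b| ≤ 2 * K * m) :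
    √(jsFun a c) ≤ √(jsFun b c) + K * √a := by
  rcases hm.eq_or_lt with rfl | hm
  · have : a = b := by
      rw [mul_zero] at hab
      exact sub_eq_zero.1 (abs_nonpos_iff.1 hab)
    subst this
    have := Real.sqrt_nonneg a
    nlinarith
  refine le_of_forall_pos_le_add fun ε hε => ?_
  have h := sqrt_jsFun_add_sub_le hm ha hb hc (pow_pos hε 2)
  have hj := jsFun_nonneg (hm.le.trans hb) hc
  have h₁ : √(jsFun a c) ≤ √(jsFun a c + ε ^ 2) := Real.sqrt_le_sqrt (by nlinarith)
  have h₂ : √(jsFun b c + ε ^ 2) ≤ √(jsFun b c) + ε := by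
    refine Real.sqrt_le_iff.2 ⟨by positivity, ?_⟩
    nlinarith [Real.sq_sqrt hj, Real.sqrt_nonneg (jsFun b c)]
  have h₃ : 1 / (2 * √m) * |a - b| ≤ K * √m := by
    rw [div_mul_eq_mul_div, one_mul, div_le_iff₀ (by positivity)]
    nlinarith [Real.mul_self_sqrt hm.le]
  have h₄ := mul_le_mul_of_nonneg_left (Real.sqrt_le_sqrt ha) hK
  linarith

theorem integrable_mul_log_div_half_add {D : Type*} [MeasurableSpace D] {ν : Measure D}
    {a c : D → ℝ} (ha : Measurable a) (hc : Measurable c) (ha0 : ∀ d, 0 ≤ a d)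
    (hc0 : ∀ d, 0 ≤ c d) (hai : Integrable a ν) (hci : Integrable c ν) :
    Integrable (fun d => a d * Real.log (a d / ((a d + c d) / 2))) ν :=
  (hai.add hci).mono' (by fun_prop)
    (ae_of_all _ fun d => abs_mul_log_div_half_add_le (ha0 d) (hc0 d))

theorem integrable_jsFun {D : Type*} [MeasurableSpace D] {ν : Measure D}
    {a c : D → ℝ} (ha : Measurable a) (hc : Measurable c) (ha0 : ∀ d, 0 ≤ a d)
    (hc0 : ∀ d, 0 ≤ c d) (hai : Integrable a ν) (hci : Integrable c ν) :
    Integrable (fun d => jsFun (a d) (c d)) ν := by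
  have h₁ := integrable_mul_log_div_half_add ha hc ha0 hc0 hai hci
  have h₂ := integrable_mul_log_div_half_add hc ha hc0 ha0 hci hai
  refine ((h₁.const_mul (1 / 2)).add (h₂.const_mul (1 / 2))).congr (ae_of_all _ fun d => ?_)
  simp only [Pi.add_apply, jsFun_eq (ha0 d) (hc0 d), add_comm (c d) (a d)]

/-- The measure with density `a`, relative to the midpoint of those with densities `a` and `c`. -/
theorem klDiv_withDensity_midpoint {D : Type*} [MeasurableSpace D] (ν : Measure D)
    {a c : D → ℝ} (ha : Measurable a) (hc : Measurable c) (ha0 : ∀ d, 0 ≤ a d)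
    (hc0 : ∀ d, 0 ≤ c d) (hai : Integrable a ν) (hci : Integrable c ν) :
    klDiv (ν.withDensity fun d => ENNReal.ofReal (a d))
      ((2 : ℝ≥0∞)⁻¹ • ((ν.withDensity fun d => ENNReal.ofReal (a d))
        + ν.withDensity fun d => ENNReal.ofReal (c d)))
      = ∫ d, a d * Real.log (a d / ((a d + c d) / 2)) ∂ν := by
  have hmid : (2 : ℝ≥0∞)⁻¹ • ((ν.withDensity fun d => ENNReal.ofReal (a d))
      + ν.withDensity fun d => ENNReal.ofReal (c d))
      = ν.withDensity fun d => ENNReal.ofReal ((a d + c d) / 2) := by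
    rw [← withDensity_add_left (by fun_prop), ← withDensity_smul _ (by fun_prop)]
    congr 1 with d
    simp only [Pi.smul_apply, Pi.add_apply, smul_eq_mul]
    rw [← ENNReal.ofReal_add (ha0 d) (hc0 d), div_eq_inv_mul, ENNReal.ofReal_mul (by norm_num),
      ENNReal.ofReal_inv_of_pos two_pos, ENNReal.ofReal_ofNat]
  rw [hmid]
  set m := ν.withDensity fun d => ENNReal.ofReal ((a d + c d) / 2) with hm
  have : IsFiniteMeasure m := isFiniteMeasure_withDensity_ofReal ((hai.add hci).div_const 2).2
  have hau : ν.withDensity (fun d => ENNReal.ofReal (a d))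
      = m.withDensity fun d => ENNReal.ofReal (a d / ((a d + c d) / 2)) := by
    rw [hm, ← withDensity_mul _ (by fun_prop) (by fun_prop)]
    congr 1 with d
    simp only [Pi.mul_apply]
    have hac : 0 ≤ (a d + c d) / 2 := by linarith [ha0 d, hc0 d]
    rw [← ENNReal.ofReal_mul hac]
    rcases hac.eq_or_lt with h | h
    · have : a d = 0 := by linarith [ha0 d, hc0 d]
      rw [← h, this]
      simp
    · rw [mul_div_cancel₀ _ h.ne']
  have hllr : llr (ν.withDensity fun d => ENNReal.ofReal (a d)) m
      =ᵐ[ν.withDensity fun d => ENNReal.ofReal (a d)]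
      fun d => Real.log (a d / ((a d + c d) / 2)) := by
    rw [hau]
    refine (withDensity_absolutelyContinuous m _).ae_le ?_
    filter_upwards [m.rnDeriv_withDensity (f := fun d => ENNReal.ofReal (a d / ((a d + c d) / 2)))
      (by fun_prop)] with d hd
    rw [llr, hd, ENNReal.toReal_ofReal]
    exact div_nonneg (ha0 d) (by linarith [ha0 d, hc0 d])
  rw [klDiv, integral_congr_ae hllr,
    integral_withDensity_eq_integral_toReal_smul (by fun_prop) (by simp)]
  exact integral_congr_ae (ae_of_all _ fun d => by simp [ha0 d])

theorem jsDiv_withDensity {D : Type*} [MeasurableSpace D] (ν : Measure D)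
    {a c : D → ℝ} (ha : Measurable a) (hc : Measurable c) (ha0 : ∀ d, 0 ≤ a d)
    (hc0 : ∀ d, 0 ≤ c d) (hai : Integrable a ν) (hci : Integrable c ν) :
    jsDiv (ν.withDensity fun d => ENNReal.ofReal (a d))
      (ν.withDensity fun d => ENNReal.ofReal (c d)) = ∫ d, jsFun (a d) (c d) ∂ν := by
  have h₁ := integrable_mul_log_div_half_add ha hc ha0 hc0 hai hci
  have h₂ := integrable_mul_log_div_half_add hc ha hc0 ha0 hci hai
  have hk := klDiv_withDensity_midpoint ν hc ha hc0 ha0 hci hai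
  rw [add_comm (ν.withDensity fun d => ENNReal.ofReal (c d))] at hk
  rw [jsDiv, klDiv_withDensity_midpoint ν ha hc ha0 hc0 hai hci, hk, ← integral_const_mul,
    ← integral_const_mul, ← integral_add (h₁.const_mul _) (h₂.const_mul _)]
  refine integral_congr_ae (ae_of_all _ fun d => ?_)
  simp only [jsFun_eq (ha0 d) (hc0 d), add_comm (c d) (a d)]

/-- A one-sided form of Minkowski's inequality in `L²`, for square roots. -/
theorem sqrt_integral_le_of_sqrt_le {D : Type*} [MeasurableSpace D] {ν : Measure D}
    {A B p : D → ℝ} {K : ℝ} (hA : Integrable A ν) (hB : Integrable B ν) (hp : Integrable p ν)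
    (hA0 : ∀ d, 0 ≤ A d) (hB0 : ∀ d, 0 ≤ B d) (hp0 : ∀ d, 0 ≤ p d) (hK : 0 ≤ K)
    (h : ∀ d, √(A d) ≤ √(B d) + K * √(p d)) :
    √(∫ d, A d ∂ν) ≤ √(∫ d, B d ∂ν) + K * √(∫ d, p d ∂ν) := by
  have memLp : ∀ {g : D → ℝ}, Integrable g ν → (∀ d, 0 ≤ g d) →
      MemLp (fun d => √(g d)) 2 ν := fun {g} hg hg0 => by
    refine (memLp_two_iff_integrable_sq hg.aestronglyMeasurable.aemeasurable.sqrt.aestronglyMeasurable).2 ?_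
    simpa only [Real.sq_sqrt (hg0 _)] using hg
  have hBm := memLp hB hB0
  have hpm := memLp hp hp0
  have hBp : Integrable (fun d => √(B d) * √(p d)) ν := hBm.integrable_mul hpm
  have hcs : ∫ d, √(B d) * √(p d) ∂ν ≤ √(∫ d, B d ∂ν) * √(∫ d, p d ∂ν) := by
    have := integral_mul_le_Lp_mul_Lq_of_nonneg (μ := ν) Real.HolderConjugate.two_two
      (ae_of_all _ fun d => Real.sqrt_nonneg (B d)) (ae_of_all _ fun d => Real.sqrt_nonneg (p d))
      (by simpa using hBm) (by simpa using hpm)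
    simpa only [Real.rpow_two, Real.sq_sqrt (hB0 _), Real.sq_sqrt (hp0 _), ← Real.sqrt_eq_rpow]
      using this
  have hB' := Real.sq_sqrt (integral_nonneg (μ := ν) hB0)
  have hp' := Real.sq_sqrt (integral_nonneg (μ := ν) hp0)
  refine Real.sqrt_le_iff.2 ⟨by positivity, ?_⟩
  calc ∫ d, A d ∂ν ≤ ∫ d, (B d + 2 * K * (√(B d) * √(p d)) + K ^ 2 * p d) ∂ν := by
        refine integral_mono hA ((hB.add (hBp.const_mul _)).add (hp.const_mul _)) fun d => ?_
        have := pow_le_pow_left₀ (Real.sqrt_nonneg _) (h d) 2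
        rw [Real.sq_sqrt (hA0 d)] at this
        nlinarith [Real.sq_sqrt (hB0 d), Real.sq_sqrt (hp0 d)]
    _ = ∫ d, B d ∂ν + 2 * K * ∫ d, √(B d) * √(p d) ∂ν + K ^ 2 * ∫ d, p d ∂ν := by
        have h₁ := hBp.const_mul (2 * K)
        have h₂ : Integrable (fun d => B d + 2 * K * (√(B d) * √(p d))) ν := hB.add h₁
        rw [integral_add h₂ (hp.const_mul _), integral_add hB h₁, integral_const_mul, integral_const_mul]
    _ ≤ _ := by nlinarith [mul_le_mul_of_nonneg_left hcs hK]

theorem abs_sub_le_tvDist {W : Type*} [MeasurableSpace W] (P Q : Measure W)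
    [IsProbabilityMeasure P] [IsProbabilityMeasure Q] {s : Set W} (hs : MeasurableSet s) :
    |P.real s - Q.real s| ≤ tvDist P Q := by
  refine le_ciSup (f := fun A : {s : Set W // MeasurableSet s} =>
    |(P A.1).toReal - (Q A.1).toReal|) ⟨1, ?_⟩ ⟨s, hs⟩
  rintro _ ⟨A, rfl⟩
  have h₁ : P.real A.1 ≤ 1 := measureReal_le_one
  have h₂ : Q.real A.1 ≤ 1 := measureReal_le_one
  have h₃ : 0 ≤ P.real A.1 := measureReal_nonneg
  have h₄ : 0 ≤ Q.real A.1 := measureReal_nonneg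
  exact abs_sub_le_iff.2 ⟨by simp only [← measureReal_def]; linarith,
    by simp only [← measureReal_def]; linarith⟩

theorem tvDist_nonneg {W : Type*} [MeasurableSpace W] (P Q : Measure W) : 0 ≤ tvDist P Q :=
  Real.iSup_nonneg fun _ => abs_nonneg _

theorem abs_integral_sub_integral_le_tvDist {W : Type*} [MeasurableSpace W] (P Q : Measure W)
    [IsProbabilityMeasure P] [IsProbabilityMeasure Q] {φ : W → ℝ} (hφ : Measurable φ) {m M : ℝ}
    (hm : ∀ w, m ≤ φ w) (hM : ∀ w, φ w ≤ M) :
    |∫ w, φ w ∂P - ∫ w, φ w ∂Q| ≤ (M - m) * tvDist P Q := by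
  have hmM : 0 ≤ M - m := by
    obtain ⟨w⟩ := P.nonempty_of_neZero
    linarith [hm w, hM w]
  have hint : ∀ (ρ : Measure W) [IsProbabilityMeasure ρ], Integrable φ ρ := fun ρ _ =>
    Integrable.of_mem_Icc m M hφ.aemeasurable (ae_of_all _ fun w => ⟨hm w, hM w⟩)
  have hlayer : ∀ (ρ : Measure W) [IsProbabilityMeasure ρ],
      ∫ w, φ w ∂ρ - m = ∫ t in Set.Ioc 0 (M - m), ρ.real {w | t ≤ φ w - m} := fun ρ _ => by
    have h : Integrable (fun w => φ w - m) ρ := (hint ρ).sub (integrable_const m)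
    rw [← h.integral_eq_integral_Ioc_meas_le (ae_of_all _ fun w => sub_nonneg.2 (hm w))
      (ae_of_all _ fun w => sub_le_sub_right (hM w) m)]
    simp [integral_sub (hint ρ) (integrable_const m)]
  have htail : ∀ (ρ : Measure W) [IsProbabilityMeasure ρ],
      IntegrableOn (fun t => ρ.real {w | t ≤ φ w - m}) (Set.Ioc 0 (M - m)) := fun ρ _ => by
    have hanti : Antitone fun t => ρ.real {w | t ≤ φ w - m} := fun s t hst =>
      measureReal_mono fun w hw => hst.trans hw
    exact (hanti.antitoneOn _).integrableOn_isCompact isCompact_Icc |>.mono_set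
      Set.Ioc_subset_Icc_self
  rw [← sub_sub_sub_cancel_right _ _ m, hlayer P, hlayer Q, ← integral_sub (htail P) (htail Q)]
  have htv : ∀ t ∈ Set.Ioc 0 (M - m),
      ‖P.real {w | t ≤ φ w - m} - Q.real {w | t ≤ φ w - m}‖ ≤ tvDist P Q := fun t _ =>
    abs_sub_le_tvDist P Q (measurableSet_le measurable_const (hφ.sub_const m))
  refine (norm_setIntegral_le_of_norm_le_const measure_Ioc_lt_top htv).trans_eq ?_
  rw [Real.volume_real_Ioc_of_le hmM, sub_zero, mul_comm]

/-- A mixture of conditional densities is a density. -/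
theorem isProbabilityMeasure_withDensity_mixture {W D : Type*} [MeasurableSpace W]
    [MeasurableSpace D] (μ : Measure D) [SigmaFinite μ] {f : D → W → ℝ}
    (hf_meas : Measurable (Function.uncurry f)) (hf_nonneg : ∀ d w, 0 ≤ f d w)
    (hf_density : ∀ w, ∫ d, f d w ∂μ = 1) (P : Measure W) [IsProbabilityMeasure P]
    (hint : ∀ d, Integrable (f d) P) :
    IsProbabilityMeasure (μ.withDensity fun d => ENNReal.ofReal (∫ w, f d w ∂P)) := by
  constructor
  rw [withDensity_apply _ MeasurableSet.univ, Measure.restrict_univ]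
  simp_rw [fun d => ofReal_integral_eq_lintegral_ofReal (hint d) (ae_of_all _ (hf_nonneg d))]
  rw [lintegral_lintegral_swap (hf_meas.ennreal_ofReal.aemeasurable)]
  have hone : ∀ w, ∫⁻ d, ENNReal.ofReal (f d w) ∂μ = 1 := fun w => by
    rw [← ofReal_integral_eq_lintegral_ofReal (Integrable.of_integral_ne_zero
      (by rw [hf_density w]; exact one_ne_zero)) (ae_of_all _ fun d => hf_nonneg d w),
      hf_density w, ENNReal.ofReal_one]
  simp [hone]

theorem integrable_and_integral_eq_one_of_withDensity {D : Type*} [MeasurableSpace D]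
    {ν : Measure D} {a : D → ℝ} (ha : Measurable a) (ha0 : ∀ d, 0 ≤ a d)
    [h : IsProbabilityMeasure (ν.withDensity fun d => ENNReal.ofReal (a d))] :
    Integrable a ν ∧ ∫ d, a d ∂ν = 1 := by
  have hl : ∫⁻ d, ENNReal.ofReal (a d) ∂ν = 1 := by
    simpa [withDensity_apply _ MeasurableSet.univ] using h.measure_univ
  refine ⟨(lintegral_ofReal_ne_top_iff_integrable ha.aestronglyMeasurable (ae_of_all _ ha0)).1
    (by simp [hl]), ?_⟩
  rw [integral_eq_lintegral_of_nonneg_ae (ae_of_all _ ha0) ha.aestronglyMeasurable, hl,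
    ENNReal.toReal_one]

theorem withDensity_ofReal_toReal_rnDeriv {D : Type*} [MeasurableSpace D] {ρ ν : Measure D}
    [SigmaFinite ρ] [SigmaFinite ν] (h : ρ ≪ ν) :
    ν.withDensity (fun d => ENNReal.ofReal (ρ.rnDeriv ν d).toReal) = ρ := by
  conv_rhs => rw [← Measure.withDensity_rnDeriv_eq ρ ν h]
  refine withDensity_congr_ae ?_
  filter_upwards [ρ.rnDeriv_lt_top ν] with d hd using ENNReal.ofReal_toReal hd.ne

/-- Lower bound for privacy leakage (single-client version): in the conditional-density
setup, `√(JS(G_Q ‖ F̆)) ≥ √(JS(G_P ‖ F̆)) − (1/2)(e^{2ξ} − 1) · TV(P, Q)`. -/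
theorem privacy_leakage_lower_bound
    {W D : Type*} [MeasurableSpace W] [MeasurableSpace D] [Nonempty W]
    (μ : Measure D) [SigmaFinite μ]
    (f : D → W → ℝ) (hf_meas : Measurable (Function.uncurry f))
    (hf_nonneg : ∀ d w, 0 ≤ f d w)
    (hf_density : ∀ w, ∫ d, f d w ∂μ = 1)
    (P Q : Measure W) [IsProbabilityMeasure P] [IsProbabilityMeasure Q]
    (F : Measure D) [IsProbabilityMeasure F]
    (ξ : ℝ) (hξ : 0 ≤ ξ)
    (hbdd : ∀ d, BddAbove (Set.range fun w => f d w))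
    (hinf_pos : ∀ d, 0 < ⨅ w, f d w)
    (hratio : ∀ d, (⨆ w, f d w) ≤ Real.exp (2 * ξ) * ⨅ w, f d w)
    (GP GQ : Measure D)
    (hGP : GP = μ.withDensity fun d => ENNReal.ofReal (∫ w, f d w ∂P))
    (hGQ : GQ = μ.withDensity fun d => ENNReal.ofReal (∫ w, f d w ∂Q)) :
    Real.sqrt (jsDiv GQ F) ≥
      Real.sqrt (jsDiv GP F) - (1 / 2) * (Real.exp (2 * ξ) - 1) * tvDist P Q := by
  have hlow : ∀ d w, (⨅ w, f d w) ≤ f d w := fun d w =>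
    ciInf_le ⟨0, by rintro _ ⟨w, rfl⟩; exact hf_nonneg d w⟩ w
  have hup : ∀ d w, f d w ≤ ⨆ w, f d w := fun d w => le_ciSup (hbdd d) w
  have hfd : ∀ d, Measurable (f d) := fun d => hf_meas.comp measurable_prodMk_left
  have hint : ∀ (ρ : Measure W) [IsProbabilityMeasure ρ] (d : D), Integrable (f d) ρ :=
    fun ρ _ d => Integrable.of_mem_Icc _ _ (hfd d).aemeasurable
      (ae_of_all _ fun w => ⟨hlow d w, hup d w⟩)
  have hmix_meas : ∀ (ρ : Measure W) [IsProbabilityMeasure ρ],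
      Measurable fun d => ∫ w, f d w ∂ρ := fun ρ _ =>
    (hf_meas.stronglyMeasurable.integral_prod_right (ν := ρ)).measurable
  have hmix_low : ∀ (ρ : Measure W) [IsProbabilityMeasure ρ] (d : D),
      (⨅ w, f d w) ≤ ∫ w, f d w ∂ρ := fun ρ _ d => by
    simpa using integral_mono (integrable_const _) (hint ρ d) (hlow d)
  have hmix_prob : ∀ (ρ : Measure W) [IsProbabilityMeasure ρ],
      IsProbabilityMeasure (μ.withDensity fun d => ENNReal.ofReal (∫ w, f d w ∂ρ)) :=
    fun ρ _ => isProbabilityMeasure_withDensity_mixture μ hf_meas hf_nonneg hf_density ρ (hint ρ)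
  set T := tvDist P Q
  set K := (1 / 2) * (Real.exp (2 * ξ) - 1) * T with hK
  have hT : 0 ≤ T := tvDist_nonneg P Q
  have hexp : 1 ≤ Real.exp (2 * ξ) := Real.one_le_exp (by positivity)
  have hK0 : 0 ≤ K := mul_nonneg (by linarith) hT
  have hdiff : ∀ d, |∫ w, f d w ∂P - ∫ w, f d w ∂Q| ≤ 2 * K * ⨅ w, f d w := fun d => by
    refine (abs_integral_sub_integral_le_tvDist P Q (hfd d) (hlow d) (hup d)).trans ?_
    have := mul_le_mul_of_nonneg_right (hratio d) hT
    rw [hK]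
    linarith
  set ν := μ + F
  set r : D → ℝ := fun d => (μ.rnDeriv ν d).toReal
  set c : D → ℝ := fun d => (F.rnDeriv ν d).toReal
  have hr : Measurable r := (μ.measurable_rnDeriv ν).ennreal_toReal
  have hc : Measurable c := (F.measurable_rnDeriv ν).ennreal_toReal
  have hr0 : ∀ d, 0 ≤ r d := fun d => ENNReal.toReal_nonneg
  have hc0 : ∀ d, 0 ≤ c d := fun d => ENNReal.toReal_nonneg
  have hci : Integrable c ν := Measure.integrable_toReal_rnDeriv
  have hμ : ν.withDensity (fun d => ENNReal.ofReal (r d)) = μ :=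
    withDensity_ofReal_toReal_rnDeriv (Measure.AbsolutelyContinuous.rfl.add_right F)
  have hF : ν.withDensity (fun d => ENNReal.ofReal (c d)) = F :=
    withDensity_ofReal_toReal_rnDeriv (Measure.le_add_left le_rfl).absolutelyContinuous
  have hpr0 : ∀ (ρ : Measure W) (d : D), 0 ≤ r d * ∫ w, f d w ∂ρ := fun ρ d =>
    mul_nonneg (hr0 d) (integral_nonneg (hf_nonneg d))
  have hpr_meas : ∀ (ρ : Measure W) [IsProbabilityMeasure ρ],
      Measurable fun d => r d * ∫ w, f d w ∂ρ := fun ρ _ => hr.mul (hmix_meas ρ)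
  have hmix_eq : ∀ (ρ : Measure W) [IsProbabilityMeasure ρ],
      μ.withDensity (fun d => ENNReal.ofReal (∫ w, f d w ∂ρ))
        = ν.withDensity fun d => ENNReal.ofReal (r d * ∫ w, f d w ∂ρ) := fun ρ _ => by
    conv_lhs => rw [← hμ]
    rw [← withDensity_mul _ hr.ennreal_ofReal (hmix_meas ρ).ennreal_ofReal]
    congr 1 with d
    exact (ENNReal.ofReal_mul (hr0 d)).symm
  have hpr : ∀ (ρ : Measure W) [IsProbabilityMeasure ρ],
      Integrable (fun d => r d * ∫ w, f d w ∂ρ) ν ∧ ∫ d, r d * ∫ w, f d w ∂ρ ∂ν = 1 :=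
    fun ρ _ => by
      have := hmix_prob ρ
      rw [hmix_eq ρ] at this
      exact integrable_and_integral_eq_one_of_withDensity (hpr_meas ρ) (hpr0 ρ)
  have hjs : ∀ (ρ : Measure W) [IsProbabilityMeasure ρ],
      jsDiv (μ.withDensity fun d => ENNReal.ofReal (∫ w, f d w ∂ρ)) F
        = ∫ d, jsFun (r d * ∫ w, f d w ∂ρ) (c d) ∂ν := fun ρ _ => by
    rw [hmix_eq ρ, ← jsDiv_withDensity ν (hpr_meas ρ) hc (hpr0 ρ) hc0 (hpr ρ).1 hci, hF]
  have hjs_int : ∀ (ρ : Measure W) [IsProbabilityMeasure ρ],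
      Integrable (fun d => jsFun (r d * ∫ w, f d w ∂ρ) (c d)) ν := fun ρ _ =>
    integrable_jsFun (hpr_meas ρ) hc (hpr0 ρ) hc0 (hpr ρ).1 hci
  have hpt : ∀ d, √(jsFun (r d * ∫ w, f d w ∂P) (c d))
      ≤ √(jsFun (r d * ∫ w, f d w ∂Q) (c d)) + K * √(r d * ∫ w, f d w ∂P) := fun d => by
    refine sqrt_jsFun_le (mul_nonneg (hr0 d) (hinf_pos d).le)
      (mul_le_mul_of_nonneg_left (hmix_low P d) (hr0 d))
      (mul_le_mul_of_nonneg_left (hmix_low Q d) (hr0 d)) (hc0 d) hK0 ?_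
    rw [← mul_sub, abs_mul, abs_of_nonneg (hr0 d)]
    linarith [mul_le_mul_of_nonneg_left (hdiff d) (hr0 d)]
  have hmain := sqrt_integral_le_of_sqrt_le (hjs_int P) (hjs_int Q) (hpr P).1
    (fun d => jsFun_nonneg (hpr0 P d) (hc0 d)) (fun d => jsFun_nonneg (hpr0 Q d) (hc0 d))
    (hpr0 P) hK0 hpt
  rw [(hpr P).2, Real.sqrt_one, mul_one, ← hjs P, ← hjs Q] at hmain
  rw [hGP, hGQ]
  linarith
end
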